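/- Let c > 0, let 𝒜⁰ : ℝ × ℝ³ → ℝ and 𝓐 : ℝ × ℝ³ → ℝ³ be C² with 𝓐(t, ·) supported in a fixed compact set 𝒦 ⊂ ℝ³ for all t in an open interval I, let θ : ℝ × ℝ³ → ℝ be C¹, and suppose the non-relativistic (γ ≡ 1) barotropic equation of motion ℰ + (v/c)×ℬ = −c⁻¹ ∇θ holds everywhere, where ℰ = −∇𝒜⁰ − c⁻¹∂_t𝓐, ℬ = ∇×𝓐, and v : ℝ × ℝ³ → ℝ³ is any velocity field. Then the helicity C(t) = ∫_{ℝ³} (𝓐·ℬ)(t, x) d³x is constant on I. -/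

import Mathlib

open MeasureTheory

noncomputable section

abbrev V3 := Fin 3 → ℝ

/-- Euclidean dot product on ℝ³. -/
def dot3 (a b : V3) : ℝ := ∑ i, a i * b i

/-- Cross product on ℝ³. -/
def cross3 (a b : V3) : V3 := fun i => a (i + 1) * b (i + 2) - a (i + 2) * b (i + 1)

/-- Time derivative ∂_t of a scalar function on ℝ × ℝ³. -/
def pdt (f : ℝ × V3 → ℝ) (p : ℝ × V3) : ℝ := fderiv ℝ f p ((1 : ℝ), (0 : V3))

/-- Spatial derivative ∂_j of a scalar function on ℝ × ℝ³. -/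
def pdx (j : Fin 3) (f : ℝ × V3 → ℝ) (p : ℝ × V3) : ℝ :=
  fderiv ℝ f p ((0 : ℝ), Pi.single j 1)

/-- Spatial gradient. -/
def grad3 (f : ℝ × V3 → ℝ) (p : ℝ × V3) : V3 := fun j => pdx j f p

/-- Spatial curl. -/
def curl3 (A : ℝ × V3 → V3) (p : ℝ × V3) : V3 := fun i =>
  pdx (i + 1) (fun q => A q (i + 2)) p - pdx (i + 2) (fun q => A q (i + 1)) p

/-- Spatial divergence. -/
def div3 (A : ℝ × V3 → V3) (p : ℝ × V3) : ℝ := ∑ j, pdx j (fun q => A q j) p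

/-- ℰ = −∇𝒜⁰ − c⁻¹ ∂_t 𝓐. -/
def Efield (c : ℝ) (A0 : ℝ × V3 → ℝ) (A : ℝ × V3 → V3) (p : ℝ × V3) : V3 := fun i =>
  -grad3 A0 p i - c⁻¹ * fderiv ℝ (fun q => A q i) p ((1 : ℝ), (0 : V3))

/-- ℬ = ∇×𝓐. -/
def Bfield (A : ℝ × V3 → V3) (p : ℝ × V3) : V3 := curl3 A p

/-- The semi-relativistic helicity C(t) = ∫_{ℝ³} 𝓐·ℬ d³x. -/
def semiHelicity (A : ℝ × V3 → V3) (t : ℝ) : ℝ :=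
  ∫ x : V3, dot3 (A (t, x)) (Bfield A (t, x))

/-!
Locally `∂ₜ(𝓐·ℬ) = 2 ∂ₜ𝓐·ℬ + ∇·(∂ₜ𝓐 × 𝓐)`, so `dC/dt = 2 ∫ ∂ₜ𝓐·ℬ`. Since `ℬ` is solenoidal and
compactly supported, `∫ ∇f·ℬ = ∫ ∇·(fℬ) = 0` for every `f`; with `f = 𝒜⁰` this turns `dC/dt` into
`-2c ∫ ℰ·ℬ`. As `v × ℬ ⊥ ℬ`, the equation of motion gives `ℰ·ℬ = -c⁻¹ ∇θ·ℬ`, whose integral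
vanishes by the case `f = θ`.
-/

section General

lemma integrable_slice {T X F : Type*} [TopologicalSpace T] [TopologicalSpace X]
    [MeasurableSpace X] [OpensMeasurableSpace X] {μ : Measure X} [IsFiniteMeasureOnCompacts μ]
    [NormedAddCommGroup F] {f : T × X → F} (hf : Continuous f) {t : T}
    (hft : HasCompactSupport fun x => f (t, x)) : Integrable (fun x => f (t, x)) μ :=
  (hf.comp (by fun_prop : Continuous fun x : X => (t, x))).integrable_of_hasCompactSupport hft

variable {E F : Type*} [NormedAddCommGroup E] [NormedSpace ℝ E]
  [NormedAddCommGroup F] [NormedSpace ℝ F]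

lemma fderiv_fderiv_apply_comm {f : E → F} {p : E} (hf : ContDiffAt ℝ 2 f p) (v w : E) :
    fderiv ℝ (fun q => fderiv ℝ f q v) p w = fderiv ℝ (fun q => fderiv ℝ f q w) p v := by
  have hd : DifferentiableAt ℝ (fderiv ℝ f) p :=
    (hf.fderiv_right (m := 1) (by norm_num)).differentiableAt one_ne_zero
  have hsymm : IsSymmSndFDerivAt ℝ f p := hf.isSymmSndFDerivAt (by simp)
  simpa [fderiv_clm_apply hd (differentiableAt_const _)] using hsymm.eq w v

lemma fderiv_slice_apply {f : ℝ × E → F} {t : ℝ} {x : E} (hf : DifferentiableAt ℝ f (t, x))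
    (v : E) : fderiv ℝ (fun y => f (t, y)) x v = fderiv ℝ f (t, x) (0, v) := by
  have hslice : HasFDerivAt (fun y => f (t, y)) _ x :=
    hf.hasFDerivAt.comp x (hasFDerivAt_prodMk_right t x)
  simp [hslice.fderiv]

variable [MeasurableSpace E] [BorelSpace E] {μ : Measure E}

lemma integral_fderiv_apply_eq_zero [FiniteDimensional ℝ E] [μ.IsAddHaarMeasure] {f : E → F}
    (hf : ContDiff ℝ 1 f) (hfs : HasCompactSupport f) (v : E) : ∫ x, fderiv ℝ f x v ∂μ = 0 := by
  have hf' : Integrable (fun x => fderiv ℝ f x v) μ :=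
    ((hf.continuous_fderiv one_ne_zero).clm_apply continuous_const).integrable_of_hasCompactSupport
      (hfs.fderiv_apply ℝ v)
  simpa using integral_smul_fderiv_eq_neg_fderiv_smul_of_integrable (f := fun _ : E => (1 : ℝ))
    (g := f) (v := v) (μ := μ) (by simp) (by simpa using hf')
    (by simpa using hf.continuous.integrable_of_hasCompactSupport hfs)
    (fun x _ => differentiableAt_const _) (fun x _ => hf.differentiable one_ne_zero x)

lemma hasDerivAt_integral_of_contDiff_of_eq_zero_off [IsFiniteMeasureOnCompacts μ]
    [SecondCountableTopologyEither E F] {f : ℝ × E → F} (hf : ContDiff ℝ 1 f) {K : Set E}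
    (hK : IsCompact K) {I : Set ℝ} (hI : IsOpen I)
    (hfK : ∀ s ∈ I, ∀ x ∉ K, f (s, x) = 0) {t : ℝ} (ht : t ∈ I) :
    HasDerivAt (fun s => ∫ x, f (s, x) ∂μ) (∫ x, fderiv ℝ f (t, x) (1, 0) ∂μ) t := by
  have hderiv (s : ℝ) (x : E) :
      HasDerivAt (fun r => f (r, x)) (fderiv ℝ f (s, x) (1, 0)) s :=
    (hf.differentiable one_ne_zero (s, x)).hasFDerivAt.comp_hasDerivAt s
      ((hasDerivAt_id s).prodMk (hasDerivAt_const s x))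
  have hcont : Continuous fun p => fderiv ℝ f p (1, 0) :=
    (hf.continuous_fderiv one_ne_zero).clm_apply continuous_const
  have hderiv_zero : ∀ s ∈ I, ∀ x ∉ K, fderiv ℝ f (s, x) (1, 0) = 0 := fun s hs x hx =>
    (hderiv s x).unique <| (hasDerivAt_const s 0).congr_of_eventuallyEq <|
      Filter.mem_of_superset (hI.mem_nhds hs) fun r hr => hfK r hr x hx
  have hslice (s : ℝ) : Continuous fun x : E => (s, x) := by fun_prop
  obtain ⟨J, hJt, hJI, hJ⟩ := local_compact_nhds (hI.mem_nhds ht)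
  obtain ⟨M, hM⟩ := (hJ.prod hK).exists_bound_of_continuousOn hcont.continuousOn
  have hbound : ∀ x, ∀ s ∈ J, ‖fderiv ℝ f (s, x) (1, 0)‖ ≤ K.indicator (fun _ => M) x := by
    intro x s hs
    by_cases hx : x ∈ K
    · simpa only [Set.indicator_of_mem hx] using hM (s, x) ⟨hs, hx⟩
    · simp only [Set.indicator_of_notMem hx, hderiv_zero s (hJI hs) x hx, norm_zero, le_refl]
  have hbound_int : Integrable (K.indicator fun _ => M) μ :=
    (integrable_indicator_iff hK.measurableSet).2 (integrableOn_const hK.measure_lt_top.ne)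
  have hint : Integrable (fun x => f (t, x)) μ :=
    integrable_slice hf.continuous (HasCompactSupport.intro hK (hfK t ht))
  exact (hasDerivAt_integral_of_dominated_loc_of_deriv_le hJt
    (.of_forall fun s => (hf.continuous.comp (hslice s)).aestronglyMeasurable) hint
    (hcont.comp (hslice t)).aestronglyMeasurable (.of_forall hbound) hbound_int
    (.of_forall fun x s _ => hderiv s x)).2

end General

lemma dot3_eq_dotProduct (a b : V3) : dot3 a b = a ⬝ᵥ b := rfl

lemma cross3_eq_crossProduct (a b : V3) : cross3 a b = crossProduct a b := by
  ext i
  fin_cases i <;> simp [cross3, cross_apply]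

lemma dot3_cross3_self (a b : V3) : dot3 (cross3 a b) b = 0 := by
  rw [cross3_eq_crossProduct, dot3_eq_dotProduct, dotProduct_comm, dot_cross_self]

/-- The time derivative `∂ₜA` of a vector field on `ℝ × ℝ³`, as in `ℰ = -∇𝒜⁰ - c⁻¹ ∂ₜ𝓐`. It is taken
component by component, hence zero in the components that are not differentiable. -/
def pdtVec (A : ℝ × V3 → V3) (p : ℝ × V3) : V3 := fun i => pdt (fun q => A q i) p

section Derivatives

variable {f g : ℝ × V3 → ℝ} {p : ℝ × V3}

lemma pdt_mul (hf : DifferentiableAt ℝ f p) (hg : DifferentiableAt ℝ g p) :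
    pdt (fun q => f q * g q) p = f p * pdt g p + pdt f p * g p := by
  simp [pdt, fderiv_fun_mul hf hg, mul_comm]

lemma pdx_mul (j : Fin 3) (hf : DifferentiableAt ℝ f p) (hg : DifferentiableAt ℝ g p) :
    pdx j (fun q => f q * g q) p = f p * pdx j g p + pdx j f p * g p := by
  simp [pdx, fderiv_fun_mul hf hg, mul_comm]

lemma pdt_sub (hf : DifferentiableAt ℝ f p) (hg : DifferentiableAt ℝ g p) :
    pdt (fun q => f q - g q) p = pdt f p - pdt g p := by
  simp [pdt, fderiv_fun_sub hf hg]

lemma pdx_sub (j : Fin 3) (hf : DifferentiableAt ℝ f p) (hg : DifferentiableAt ℝ g p) :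
    pdx j (fun q => f q - g q) p = pdx j f p - pdx j g p := by
  simp [pdx, fderiv_fun_sub hf hg]

lemma pdx_pdx_comm (hf : ContDiffAt ℝ 2 f p) (i j : Fin 3) :
    pdx i (pdx j f) p = pdx j (pdx i f) p :=
  fderiv_fderiv_apply_comm hf _ _

lemma pdt_pdx_comm (hf : ContDiffAt ℝ 2 f p) (j : Fin 3) :
    pdt (pdx j f) p = pdx j (pdt f) p :=
  fderiv_fderiv_apply_comm hf _ _

end Derivatives

section Smoothness

variable {m n : WithTop ℕ∞} {f : ℝ × V3 → ℝ} {A B : ℝ × V3 → V3}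

lemma contDiff_pdx (hf : ContDiff ℝ n f) (hmn : m + 1 ≤ n) (j : Fin 3) :
    ContDiff ℝ m (pdx j f) :=
  (hf.fderiv_right hmn).clm_apply contDiff_const

lemma contDiff_pdt (hf : ContDiff ℝ n f) (hmn : m + 1 ≤ n) : ContDiff ℝ m (pdt f) :=
  (hf.fderiv_right hmn).clm_apply contDiff_const

lemma contDiff_pdtVec (hA : ContDiff ℝ n A) (hmn : m + 1 ≤ n) : ContDiff ℝ m (pdtVec A) :=
  contDiff_pi.2 fun i => contDiff_pdt (contDiff_pi.1 hA i) hmn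

lemma contDiff_curl3 (hA : ContDiff ℝ n A) (hmn : m + 1 ≤ n) : ContDiff ℝ m (curl3 A) :=
  contDiff_pi.2 fun i => (contDiff_pdx (contDiff_pi.1 hA (i + 2)) hmn (i + 1)).sub
    (contDiff_pdx (contDiff_pi.1 hA (i + 1)) hmn (i + 2))

lemma contDiff_dot3 (hA : ContDiff ℝ n A) (hB : ContDiff ℝ n B) :
    ContDiff ℝ n fun q => dot3 (A q) (B q) :=
  ContDiff.sum fun i _ => (contDiff_pi.1 hA i).mul (contDiff_pi.1 hB i)

lemma contDiff_cross3 (hA : ContDiff ℝ n A) (hB : ContDiff ℝ n B) :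
    ContDiff ℝ n fun q => cross3 (A q) (B q) :=
  contDiff_pi.2 fun i => ((contDiff_pi.1 hA (i + 1)).mul (contDiff_pi.1 hB (i + 2))).sub
    ((contDiff_pi.1 hA (i + 2)).mul (contDiff_pi.1 hB (i + 1)))

lemma continuous_grad3 (hf : ContDiff ℝ 1 f) : Continuous (grad3 f) :=
  continuous_pi fun j => (contDiff_pdx (m := 0) hf (by norm_num) j).continuous

lemma continuous_Efield (c : ℝ) {A0 : ℝ × V3 → ℝ} (hA0 : ContDiff ℝ 1 A0) (hA : ContDiff ℝ 1 A) :
    Continuous (Efield c A0 A) :=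
  (continuous_grad3 hA0).neg.sub
    ((contDiff_pdtVec (m := 0) hA (by norm_num)).continuous.const_smul c⁻¹)

end Smoothness

section VectorCalculus

variable {f : ℝ × V3 → ℝ} {A B : ℝ × V3 → V3} {p : ℝ × V3}

lemma div3_smul (hf : DifferentiableAt ℝ f p) (hA : DifferentiableAt ℝ A p) :
    div3 (fun q => f q • A q) p = dot3 (grad3 f p) (A p) + f p * div3 A p := by
  have hA' := differentiableAt_pi.1 hA
  simp only [div3, dot3, grad3, Pi.smul_apply, smul_eq_mul, pdx_mul _ hf (hA' _),
    Finset.sum_add_distrib, Finset.mul_sum]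
  ring

lemma div3_cross3 (hA : DifferentiableAt ℝ A p) (hB : DifferentiableAt ℝ B p) :
    div3 (fun q => cross3 (A q) (B q)) p =
      dot3 (B p) (curl3 A p) - dot3 (A p) (curl3 B p) := by
  have hA' := differentiableAt_pi.1 hA
  have hB' := differentiableAt_pi.1 hB
  simp only [div3, dot3, cross3, curl3, Fin.sum_univ_three, pdx_sub _ ((hA' _).fun_mul (hB' _))
    ((hA' _).fun_mul (hB' _)), pdx_mul _ (hA' _) (hB' _), Fin.reduceAdd]
  ring

lemma div3_curl3 (hA : ContDiff ℝ 2 A) : div3 (curl3 A) p = 0 := by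
  have hA' := contDiff_pi.1 hA
  have hpdx (i j : Fin 3) : DifferentiableAt ℝ (pdx i fun q => A q j) p :=
    (contDiff_pdx (m := 1) (hA' j) (by norm_num) i).differentiable one_ne_zero p
  simp only [div3, curl3, Fin.sum_univ_three, pdx_sub _ (hpdx _ _) (hpdx _ _), Fin.reduceAdd]
  rw [pdx_pdx_comm (hA' 2).contDiffAt 0 1, pdx_pdx_comm (hA' 1).contDiffAt 0 2,
    pdx_pdx_comm (hA' 0).contDiffAt 1 2]
  ring

lemma pdt_dot3 (hA : DifferentiableAt ℝ A p) (hB : DifferentiableAt ℝ B p) :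
    pdt (fun q => dot3 (A q) (B q)) p = dot3 (A p) (pdtVec B p) + dot3 (pdtVec A p) (B p) := by
  have hA' := differentiableAt_pi.1 hA
  have hB' := differentiableAt_pi.1 hB
  have hsum : pdt (fun q => ∑ i, A q i * B q i) p = ∑ i, pdt (fun q => A q i * B q i) p := by
    simp [pdt, fderiv_fun_sum fun i _ => (hA' i).fun_mul (hB' i)]
  simp only [dot3, pdtVec, hsum, pdt_mul (hA' _) (hB' _), Finset.sum_add_distrib]

lemma pdtVec_curl3 (hA : ContDiff ℝ 2 A) : pdtVec (curl3 A) p = curl3 (pdtVec A) p := by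
  have hA' := contDiff_pi.1 hA
  have hpdx (i j : Fin 3) : DifferentiableAt ℝ (pdx i fun q => A q j) p :=
    (contDiff_pdx (m := 1) (hA' j) (by norm_num) i).differentiable one_ne_zero p
  ext i
  simp only [pdtVec, curl3, pdt_sub (hpdx _ _) (hpdx _ _), pdt_pdx_comm (hA' _).contDiffAt]

lemma pdt_dot3_curl3 (hA : ContDiff ℝ 2 A) :
    pdt (fun q => dot3 (A q) (curl3 A q)) p =
      2 * dot3 (pdtVec A p) (curl3 A p) + div3 (fun q => cross3 (pdtVec A q) (A q)) p := by
  have hA_diff : DifferentiableAt ℝ A p := hA.differentiable two_ne_zero p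
  have hcurl : DifferentiableAt ℝ (curl3 A) p :=
    (contDiff_curl3 (m := 1) hA (by norm_num)).differentiable one_ne_zero p
  have hpdt : DifferentiableAt ℝ (pdtVec A) p :=
    (contDiff_pdtVec (m := 1) hA (by norm_num)).differentiable one_ne_zero p
  rw [pdt_dot3 hA_diff hcurl, pdtVec_curl3 hA, div3_cross3 hpdt hA_diff]
  ring

end VectorCalculus

section Slices

variable {f : ℝ × V3 → ℝ} {A B : ℝ × V3 → V3} {t : ℝ}

lemma pdx_eq_fderiv_slice {x : V3} (hf : DifferentiableAt ℝ f (t, x)) (j : Fin 3) :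
    pdx j f (t, x) = fderiv ℝ (fun y => f (t, y)) x (Pi.single j 1) :=
  (fderiv_slice_apply hf _).symm

lemma hasCompactSupport_pdx_slice (hf : Differentiable ℝ f)
    (hft : HasCompactSupport fun x => f (t, x)) (j : Fin 3) :
    HasCompactSupport fun x => pdx j f (t, x) := by
  simpa only [pdx_eq_fderiv_slice (hf _)] using hft.fderiv_apply ℝ (Pi.single j 1)

lemma hasCompactSupport_apply_slice (hAt : HasCompactSupport fun x => A (t, x)) (i : Fin 3) :
    HasCompactSupport fun x => A (t, x) i :=
  hAt.comp_left (g := fun a : V3 => a i) rfl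

lemma hasCompactSupport_curl3_slice (hA : Differentiable ℝ A)
    (hAt : HasCompactSupport fun x => A (t, x)) : HasCompactSupport fun x => curl3 A (t, x) := by
  have hpdx (j i : Fin 3) :
      ∀ x ∉ tsupport (fun x => A (t, x)), pdx j (fun q => A q i) (t, x) = 0 := by
    intro x hx
    have hxi : x ∉ tsupport fun y => A (t, y) i :=
      mt (fun h => tsupport_comp_subset (g := fun a : V3 => a i) rfl _ h) hx
    rw [pdx_eq_fderiv_slice (differentiable_pi.1 hA i _), fderiv_of_notMem_tsupport ℝ hxi]
    rfl
  refine HasCompactSupport.intro hAt.isCompact fun x hx => funext fun i => ?_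
  simp only [curl3, hpdx _ _ x hx, sub_zero, Pi.zero_apply]

lemma integrable_pdx_slice (hf : ContDiff ℝ 1 f) (hft : HasCompactSupport fun x => f (t, x))
    (j : Fin 3) : Integrable fun x => pdx j f (t, x) :=
  integrable_slice (contDiff_pdx (m := 0) hf (by norm_num) j).continuous
    (hasCompactSupport_pdx_slice (hf.differentiable one_ne_zero) hft j)

lemma integral_pdx_slice_eq_zero (hf : ContDiff ℝ 1 f)
    (hft : HasCompactSupport fun x => f (t, x)) (j : Fin 3) : ∫ x, pdx j f (t, x) = 0 := by
  simp only [pdx_eq_fderiv_slice (hf.differentiable one_ne_zero _)]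
  exact integral_fderiv_apply_eq_zero (hf.comp (by fun_prop)) hft _

lemma integrable_div3_slice (hA : ContDiff ℝ 1 A) (hAt : HasCompactSupport fun x => A (t, x)) :
    Integrable fun x => div3 A (t, x) :=
  integrable_finsetSum _ fun j _ =>
    integrable_pdx_slice (contDiff_pi.1 hA j) (hasCompactSupport_apply_slice hAt j) j

lemma integral_div3_slice_eq_zero (hA : ContDiff ℝ 1 A)
    (hAt : HasCompactSupport fun x => A (t, x)) : ∫ x, div3 A (t, x) = 0 := by
  have hA' := contDiff_pi.1 hA
  have hAt' := hasCompactSupport_apply_slice hAt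
  simp only [div3]
  rw [integral_finsetSum _ fun j _ => integrable_pdx_slice (hA' j) (hAt' j) j]
  exact Finset.sum_eq_zero fun j _ => integral_pdx_slice_eq_zero (hA' j) (hAt' j) j

lemma integrable_dot3_slice (hA : Continuous A) (hB : Continuous B)
    (hBt : HasCompactSupport fun x => B (t, x)) :
    Integrable fun x => dot3 (A (t, x)) (B (t, x)) :=
  integrable_finsetSum _ fun i _ => integrable_slice (f := fun q => A q i * B q i)
    (by fun_prop) (hasCompactSupport_apply_slice hBt i).mul_left

lemma integral_dot3_grad3_curl3_eq_zero (hf : ContDiff ℝ 1 f) (hA : ContDiff ℝ 2 A)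
    (hAt : HasCompactSupport fun x => A (t, x)) :
    ∫ x, dot3 (grad3 f (t, x)) (curl3 A (t, x)) = 0 := by
  have hcurl : ContDiff ℝ 1 (curl3 A) := contDiff_curl3 hA (by norm_num)
  have hdiv (p) : div3 (fun q => f q • curl3 A q) p = dot3 (grad3 f p) (curl3 A p) := by
    rw [div3_smul (hf.differentiable one_ne_zero p) (hcurl.differentiable one_ne_zero p),
      div3_curl3 hA, mul_zero, add_zero]
  simp only [← hdiv]
  have hcurl_supp : HasCompactSupport fun x => f (t, x) • curl3 A (t, x) :=
    (hasCompactSupport_curl3_slice (hA.differentiable two_ne_zero) hAt).mono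
      fun x => mt fun hx => by simp [hx]
  exact integral_div3_slice_eq_zero (hf.smul hcurl) hcurl_supp

end Slices

section Helicity

variable {c t : ℝ} {A0 θ : ℝ × V3 → ℝ} {A : ℝ × V3 → V3} {I : Set ℝ} {K : Set V3}

lemma hasDerivAt_semiHelicity_pdtVec (hA : ContDiff ℝ 2 A) (hI : IsOpen I) (hK : IsCompact K)
    (hAK : ∀ s ∈ I, ∀ x ∉ K, A (s, x) = 0) (ht : t ∈ I) :
    HasDerivAt (semiHelicity A) (2 * ∫ x, dot3 (pdtVec A (t, x)) (Bfield A (t, x))) t := by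
  have hAt : HasCompactSupport fun x => A (t, x) := HasCompactSupport.intro hK (hAK t ht)
  have hA1 : ContDiff ℝ 1 A := hA.of_le one_le_two
  have hcurl : ContDiff ℝ 1 (curl3 A) := contDiff_curl3 hA (by norm_num)
  have hpdt : ContDiff ℝ 1 (pdtVec A) := contDiff_pdtVec hA (by norm_num)
  have hflux : ContDiff ℝ 1 fun q => cross3 (pdtVec A q) (A q) := contDiff_cross3 hpdt hA1
  have hflux_supp : HasCompactSupport fun x => cross3 (pdtVec A (t, x)) (A (t, x)) :=
    HasCompactSupport.intro hK fun x hx => by ext i; simp [cross3, hAK t ht x hx]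
  have hderiv := hasDerivAt_integral_of_contDiff_of_eq_zero_off (μ := volume)
    (contDiff_dot3 hA1 hcurl) hK hI (fun s hs x hx => by simp [dot3, hAK s hs x hx]) ht
  convert! hderiv using 1
  calc 2 * ∫ x, dot3 (pdtVec A (t, x)) (curl3 A (t, x))
      = (∫ x, 2 * dot3 (pdtVec A (t, x)) (curl3 A (t, x))) +
          ∫ x, div3 (fun q => cross3 (pdtVec A q) (A q)) (t, x) := by
        rw [integral_div3_slice_eq_zero hflux hflux_supp, add_zero, integral_const_mul]
    _ = ∫ x, pdt (fun q => dot3 (A q) (curl3 A q)) (t, x) := by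
        simp only [pdt_dot3_curl3 hA]
        exact (integral_add ((integrable_dot3_slice hpdt.continuous hcurl.continuous
          (hasCompactSupport_curl3_slice (hA.differentiable two_ne_zero) hAt)).const_mul 2)
          (integrable_div3_slice hflux hflux_supp)).symm

lemma pdtVec_eq_neg_smul_Efield_add_grad3 (hc : c ≠ 0) (p : ℝ × V3) :
    pdtVec A p = -c • (Efield c A0 A p + grad3 A0 p) := by
  ext i
  simp only [pdtVec, pdt, Efield, Pi.smul_apply, Pi.add_apply, smul_eq_mul]
  field_simp
  ring

theorem hasDerivAt_semiHelicity (hc : c ≠ 0) (hA0 : ContDiff ℝ 1 A0) (hA : ContDiff ℝ 2 A)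
    (hI : IsOpen I) (hK : IsCompact K) (hAK : ∀ s ∈ I, ∀ x ∉ K, A (s, x) = 0) (ht : t ∈ I) :
    HasDerivAt (semiHelicity A)
      (-2 * c * ∫ x, dot3 (Efield c A0 A (t, x)) (Bfield A (t, x))) t := by
  have hAt : HasCompactSupport fun x => A (t, x) := HasCompactSupport.intro hK (hAK t ht)
  have hB : Continuous (Bfield A) := (contDiff_curl3 (m := 1) hA (by norm_num)).continuous
  have hBt : HasCompactSupport fun x => Bfield A (t, x) :=
    hasCompactSupport_curl3_slice (hA.differentiable two_ne_zero) hAt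
  have hE_int := integrable_dot3_slice (continuous_Efield c hA0 (hA.of_le one_le_two)) hB hBt
  have hgrad_int := integrable_dot3_slice (continuous_grad3 hA0) hB hBt
  have hpdt (p) : dot3 (pdtVec A p) (Bfield A p) =
      -c * (dot3 (Efield c A0 A p) (Bfield A p) + dot3 (grad3 A0 p) (Bfield A p)) := by
    simp only [pdtVec_eq_neg_smul_Efield_add_grad3 (A0 := A0) hc, dot3_eq_dotProduct,
      smul_dotProduct, add_dotProduct, smul_eq_mul]
  have hgrad : ∫ x, dot3 (grad3 A0 (t, x)) (Bfield A (t, x)) = 0 :=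
    integral_dot3_grad3_curl3_eq_zero hA0 hA hAt
  convert! hasDerivAt_semiHelicity_pdtVec hA hI hK hAK ht using 1
  simp only [hpdt]
  rw [integral_const_mul, integral_add hE_int hgrad_int, hgrad]
  ring

lemma dot3_Efield_Bfield {v : V3} {p : ℝ × V3}
    (heqm : ∀ i, Efield c A0 A p i + cross3 v (Bfield A p) i / c = -c⁻¹ * grad3 θ p i) :
    dot3 (Efield c A0 A p) (Bfield A p) = -c⁻¹ * dot3 (grad3 θ p) (Bfield A p) := by
  have hE : Efield c A0 A p = -c⁻¹ • grad3 θ p - c⁻¹ • cross3 v (Bfield A p) := by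
    ext i
    simp only [Pi.sub_apply, Pi.smul_apply, smul_eq_mul, ← heqm i]
    ring
  have horth := dot3_cross3_self v (Bfield A p)
  simp only [dot3_eq_dotProduct] at horth ⊢
  simp only [hE, sub_dotProduct, smul_dotProduct, horth, smul_eq_mul, mul_zero, sub_zero]

theorem helicity_conservation_nonrelativistic_barotropic_general (hc : c ≠ 0)
    (hA0 : ContDiff ℝ 1 A0) (hA : ContDiff ℝ 2 A) (hθ : ContDiff ℝ 1 θ)
    (hI : IsOpen I) (hI_conn : IsPreconnected I) (hK : IsCompact K)
    (hAK : ∀ t ∈ I, ∀ x ∉ K, A (t, x) = 0)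
    (hEB : ∀ t ∈ I, ∀ x, dot3 (Efield c A0 A (t, x)) (Bfield A (t, x)) =
      -c⁻¹ * dot3 (grad3 θ (t, x)) (Bfield A (t, x))) :
    ∀ t₁ ∈ I, ∀ t₂ ∈ I, semiHelicity A t₁ = semiHelicity A t₂ := by
  have hderiv : ∀ t ∈ I, HasDerivAt (semiHelicity A) 0 t := fun t ht => by
    have hgrad : ∫ x, dot3 (grad3 θ (t, x)) (Bfield A (t, x)) = 0 :=
      integral_dot3_grad3_curl3_eq_zero hθ hA (HasCompactSupport.intro hK (hAK t ht))
    simpa only [hEB t ht, integral_const_mul, hgrad, mul_zero] using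
      hasDerivAt_semiHelicity hc hA0 hA hI hK hAK ht
  intro t₁ ht₁ t₂ ht₂
  exact hI.is_const_of_deriv_eq_zero hI_conn
    (fun t ht => (hderiv t ht).differentiableAt.differentiableWithinAt)
    (fun t ht => (hderiv t ht).deriv) ht₁ ht₂

end Helicity

/-- In a non-relativistic (γ ≡ 1) barotropic fluid, ℰ + (v/c)×ℬ = −c⁻¹∇θ implies that
    the helicity C(t) = ∫ 𝓐·ℬ d³x is constant. -/
theorem helicity_conservation_nonrelativistic_barotropic (c : ℝ) (hc : 0 < c)
    (A0 : ℝ × V3 → ℝ) (A : ℝ × V3 → V3) (θ : ℝ × V3 → ℝ) (v : ℝ × V3 → V3)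
    (hA0 : ContDiff ℝ 2 A0) (hA : ContDiff ℝ 2 A) (hθ : ContDiff ℝ 1 θ)
    (a b : ℝ) (𝒦 : Set V3) (h𝒦 : IsCompact 𝒦)
    (hsupp : ∀ t ∈ Set.Ioo a b, ∀ x : V3, x ∉ 𝒦 → A (t, x) = 0)
    (heqm : ∀ p, ∀ i : Fin 3,
      Efield c A0 A p i + cross3 (v p) (Bfield A p) i / c = -c⁻¹ * grad3 θ p i) :
    ∀ t₁ ∈ Set.Ioo a b, ∀ t₂ ∈ Set.Ioo a b,
      semiHelicity A t₁ = semiHelicity A t₂ := by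
  exact helicity_conservation_nonrelativistic_barotropic_general hc.ne' (hA0.of_le one_le_two) hA hθ
    isOpen_Ioo isPreconnected_Ioo h𝒦 hsupp fun t _ x => dot3_Efield_Bfield (heqm (t, x))
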